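/- arXiv:2310.04605 — 2 statements merged into one kernel-verified Lean document; each statement's English description precedes it below -/
import Mathlib

section
/- Let Φ : ℝⁿ → ℝ and f : ℝⁿ → ℝ be convex functions. Let b₁, …, b_N ∈ ℝⁿ, z₁, …, z_N ∈ ℝ and y₁, …, y_N ∈ ℝⁿ be such that for every i ∈ {1, …, N}: f(bᵢ) = Φ(bᵢ) = zᵢ, and yᵢ is a subgradient of f at bᵢ and also a subgradient of Φ at bᵢ. Then for every b in B = conv{b₁, …, b_N}, |f(b) − Φ(b)| ≤ (maxᵢ ‖yᵢ‖) · diam(B). -/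
open scoped RealInnerProductSpace

/-!
A quasiconvex `f` takes at `x` in the hull a value at most `f (b i)` for some data point `b i`.
Since `f (b i) = Φ (b i)`, the subgradient inequality for `Φ` at `b i` then gives
`f x - Φ x ≤ Φ (b i) - Φ x ≤ ‖y i‖ * dist x (b i)`. Exchanging `f` and `Φ` bounds `Φ x - f x`.
-/

theorem exists_ge_of_mem_convexHull_of_quasiconvexOn {𝕜 E β : Type*} [Semiring 𝕜] [PartialOrder 𝕜]
    [AddCommMonoid E] [Module 𝕜 E] [LinearOrder β] {s t : Set E} {f : E → β} {x : E}
    (hf : QuasiconvexOn 𝕜 s f) (hts : t ⊆ s) (hx : x ∈ convexHull 𝕜 t) :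
    ∃ a ∈ t, f x ≤ f a := by
  by_contra! hlt
  have hull_subset : convexHull 𝕜 t ⊆ {a ∈ s | f a < f x} :=
    convexHull_min (fun a ha ↦ ⟨hts ha, hlt a ha⟩) (hf.convex_lt (f x))
  exact (hull_subset hx).2.false

section Subgradient

variable {E ι : Type*} [SeminormedAddCommGroup E] [NormedSpace ℝ E]

/-- The functional `y` is a subgradient at `a` of the restriction of `g` to `s`. Subgradients live
in the dual space; in an inner product space a vector `v` acts as one through `innerSL ℝ v`. -/
def HasSubgradientWithinAt (g : E → ℝ) (y : StrongDual ℝ E) (s : Set E) (a : E) : Prop :=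
  ∀ x ∈ s, g a + y (x - a) ≤ g x

theorem HasSubgradientWithinAt.sub_le_norm_mul_dist {g : E → ℝ} {y : StrongDual ℝ E} {s : Set E}
    {a x : E} (hy : HasSubgradientWithinAt g y s a) (hx : x ∈ s) :
    g a - g x ≤ ‖y‖ * dist x a :=
  calc
    g a - g x ≤ -y (x - a) := by linarith [hy x hx]
    _ ≤ ‖y (x - a)‖ := neg_le_abs _
    _ ≤ ‖y‖ * dist x a := by simpa only [dist_eq_norm] using y.le_opNorm (x - a)

variable {f g : E → ℝ} {b : ι → E} {y : ι → StrongDual ℝ E} {M : ℝ} {x : E}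

theorem sub_le_mul_diam_of_hasSubgradientWithinAt (hb : Bornology.IsBounded (Set.range b))
    (hf : QuasiconvexOn ℝ (convexHull ℝ (Set.range b)) f) (hfg : ∀ i, f (b i) ≤ g (b i))
    (hy : ∀ i, HasSubgradientWithinAt g (y i) (convexHull ℝ (Set.range b)) (b i))
    (hyM : ∀ i, ‖y i‖ ≤ M) (hx : x ∈ convexHull ℝ (Set.range b)) :
    f x - g x ≤ M * Metric.diam (convexHull ℝ (Set.range b)) := by
  have range_subset : Set.range b ⊆ convexHull ℝ (Set.range b) := subset_convexHull ℝ _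
  obtain ⟨_, ⟨i, rfl⟩, hfx⟩ :=
    exists_ge_of_mem_convexHull_of_quasiconvexOn hf range_subset hx
  have dist_le_diam : dist x (b i) ≤ Metric.diam (convexHull ℝ (Set.range b)) :=
    Metric.dist_le_diam_of_mem (isBounded_convexHull.2 hb) hx (range_subset ⟨i, rfl⟩)
  have M_nonneg : 0 ≤ M := (norm_nonneg _).trans (hyM i)
  calc
    f x - g x ≤ g (b i) - g x := sub_le_sub_right (hfx.trans (hfg i)) _
    _ ≤ ‖y i‖ * dist x (b i) := (hy i).sub_le_norm_mul_dist hx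
    _ ≤ M * Metric.diam (convexHull ℝ (Set.range b)) := by gcongr; exact hyM i

theorem icnn_perfect_fit_generalization_bound_general {w : ι → StrongDual ℝ E}
    (hb : Bornology.IsBounded (Set.range b))
    (hf : QuasiconvexOn ℝ (convexHull ℝ (Set.range b)) f)
    (hg : QuasiconvexOn ℝ (convexHull ℝ (Set.range b)) g) (hfg : ∀ i, f (b i) = g (b i))
    (hy : ∀ i, HasSubgradientWithinAt f (y i) (convexHull ℝ (Set.range b)) (b i))
    (hw : ∀ i, HasSubgradientWithinAt g (w i) (convexHull ℝ (Set.range b)) (b i))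
    (hyM : ∀ i, ‖y i‖ ≤ M) (hwM : ∀ i, ‖w i‖ ≤ M) (hx : x ∈ convexHull ℝ (Set.range b)) :
    |f x - g x| ≤ M * Metric.diam (convexHull ℝ (Set.range b)) :=
  abs_sub_le_iff.2
    ⟨sub_le_mul_diam_of_hasSubgradientWithinAt hb hf (fun i ↦ (hfg i).le) hw hwM hx,
      sub_le_mul_diam_of_hasSubgradientWithinAt hb hg (fun i ↦ (hfg i).ge) hy hyM hx⟩

end Subgradient

/-- **Theorem 2 of the paper** (perfect-fit generalization bound for ICNNs).
If the convex function `f` (the ICNN) perfectly fits the convex value function `Φ`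
on the data points `b i` (matching values `z i` and sharing subgradients `y i`),
then on the convex hull `B` of the data points, `|f - Φ| ≤ (max_i ‖y i‖) * diam B`. -/
theorem icnn_perfect_fit_generalization_bound
    {n N : ℕ} (hN : 0 < N)
    (Φ f : EuclideanSpace ℝ (Fin n) → ℝ)
    (hΦ : ConvexOn ℝ Set.univ Φ) (hf : ConvexOn ℝ Set.univ f)
    (b : Fin N → EuclideanSpace ℝ (Fin n))
    (z : Fin N → ℝ)
    (y : Fin N → EuclideanSpace ℝ (Fin n))
    (hfz : ∀ i, f (b i) = z i) (hΦz : ∀ i, Φ (b i) = z i)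
    (hyf : ∀ i, ∀ b' : EuclideanSpace ℝ (Fin n), f (b i) + ⟪y i, b' - b i⟫ ≤ f b')
    (hyΦ : ∀ i, ∀ b' : EuclideanSpace ℝ (Fin n), Φ (b i) + ⟪y i, b' - b i⟫ ≤ Φ b') :
    ∀ x ∈ convexHull ℝ (Set.range b),
      |f x - Φ x| ≤ (⨆ i, ‖y i‖) * Metric.diam (convexHull ℝ (Set.range b)) := by
  intro x hx
  have hull_convex := convex_convexHull ℝ (Set.range b)
  have norm_le (i : Fin N) : ‖innerSL ℝ (y i)‖ ≤ ⨆ i, ‖y i‖ :=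
    (innerSL_apply_norm ℝ (y i)).trans_le (le_ciSup (Set.finite_range fun i ↦ ‖y i‖).bddAbove i)
  exact icnn_perfect_fit_generalization_bound_general (Set.finite_range b).isBounded
    (hf.subset (Set.subset_univ _) hull_convex).quasiconvexOn
    (hΦ.subset (Set.subset_univ _) hull_convex).quasiconvexOn
    (fun i ↦ (hfz i).trans (hΦz i).symm) (fun i b' _ ↦ hyf i b') (fun i b' _ ↦ hyΦ i b')
    norm_le norm_le hx
end

section
/- Let Φ : ℝⁿ → ℝ and f : ℝⁿ → ℝ be convex functions and b₁, …, b_N ∈ ℝⁿ. Set zᵢ = Φ(bᵢ), z̃ᵢ = f(bᵢ), let yᵢ be a subgradient of Φ at bᵢ and ỹᵢ a subgradient of f at bᵢ. On B = conv{b₁, …, b_N} define f̌(b) = maxᵢ (z̃ᵢ + ⟨ỹᵢ, b − bᵢ⟩), f̂(b) = inf{Σᵢ λᵢ z̃ᵢ : λ ≥ 0, Σᵢ λᵢ = 1, Σᵢ λᵢ bᵢ = b}, and analogously Φ̌(b) = maxᵢ (zᵢ + ⟨yᵢ, b − bᵢ⟩), Φ̂(b) = inf{Σᵢ λᵢ zᵢ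 : λ ≥ 0, Σᵢ λᵢ = 1, Σᵢ λᵢ bᵢ = b}. Then the constant M := sup_{b ∈ B} max(f̂(b) − Φ̌(b), Φ̂(b) − f̌(b)) is finite, depends only on the data {(bᵢ, zᵢ, yᵢ, z̃ᵢ, ỹᵢ)}, and satisfies |f(b) − Φ(b)| ≤ M for all b ∈ B. -/
open scoped RealInnerProductSpace

/-- The piecewise-affine lower envelope `ǧ(x) = maxᵢ (zᵢ + ⟪yᵢ, x − bᵢ⟫)`. -/
noncomputable def lowerEnvelope {n N : ℕ}
    (b y : Fin N → EuclideanSpace ℝ (Fin n)) (z : Fin N → ℝ)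
    (x : EuclideanSpace ℝ (Fin n)) : ℝ :=
  ⨆ i, (z i + ⟪y i, x - b i⟫)

/-- The convex-combination upper envelope
`ĝ(x) = inf { Σᵢ λᵢ zᵢ : λ ≥ 0, Σᵢ λᵢ = 1, Σᵢ λᵢ bᵢ = x }`. -/
noncomputable def upperEnvelope {n N : ℕ}
    (b : Fin N → EuclideanSpace ℝ (Fin n)) (z : Fin N → ℝ)
    (x : EuclideanSpace ℝ (Fin n)) : ℝ :=
  sInf {r | ∃ lam : Fin N → ℝ, (∀ i, 0 ≤ lam i) ∧ (∑ i, lam i) = 1 ∧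
      (∑ i, lam i • b i) = x ∧ r = ∑ i, lam i * z i}

/-!
Subgradient inequalities put a function above its affine pieces, and Jensen's inequality puts it
below every interpolation of its values, so `f̌ ≤ f ≤ f̂` and `Φ̌ ≤ Φ ≤ Φ̂` on `B`. Hence
`f - Φ ≤ f̂ - Φ̌` and `Φ - f ≤ Φ̂ - f̌`. The right-hand sides are bounded above on `B` because
convex combinations of the values are at most the largest value, while an affine function on `B`
is at least its smallest value at the points `bᵢ`.
-/

section Envelopes

variable {ι E : Type*} [AddCommGroup E] [Module ℝ E]

/-- The maximum of the affine functions with value `z i` at `b i` and linear part `y i`: the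
minorant of a function that its values and subgradients at the points `b i` provide. It extends
`lowerEnvelope` to real vector spaces, with linear functionals as subgradients. It is `0` when `ι`
is empty. -/
noncomputable def supportEnvelope (b : ι → E) (y : ι → Module.Dual ℝ E) (z : ι → ℝ) (x : E) : ℝ :=
  ⨆ i, (z i + y i (x - b i))

/-- The least value at `x` obtained by interpolating the values `z i` at the points `b i` along
convex combinations: the majorant of a convex function that its values at the points `b i` provide.
It extends `upperEnvelope` to real vector spaces. It is `0` when `x` is outside the convex hull of
the points `b i`. -/
noncomputable def interpolationEnvelope [Fintype ι] (b : ι → E) (z : ι → ℝ) (x : E) : ℝ :=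
  sInf {r | ∃ w : ι → ℝ, (∀ i, 0 ≤ w i) ∧ ∑ i, w i = 1 ∧ ∑ i, w i • b i = x ∧
    r = ∑ i, w i * z i}

/-- The larger of the differences `f̂ - Φ̌` and `Φ̂ - f̌`, where `Φ` has values `z` and subgradients
`y`, and `f` has values `zt` and subgradients `yt`, at the points `b i`. Its supremum over the
convex hull of these points is the constant `M` of the generalization bound. -/
noncomputable def envelopeGap [Fintype ι] (b : ι → E) (y yt : ι → Module.Dual ℝ E)
    (z zt : ι → ℝ) (x : E) : ℝ :=
  max (interpolationEnvelope b zt x - supportEnvelope b y z x)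
    (interpolationEnvelope b z x - supportEnvelope b yt zt x)

theorem convexHull_range_eq_image_stdSimplex [Fintype ι] (b : ι → E) :
    convexHull ℝ (Set.range b) = Fintype.linearCombination ℝ b '' stdSimplex ℝ ι := by
  classical
  rw [← convexHull_rangle_single_eq_stdSimplex, LinearMap.image_convexHull, ← Set.range_comp]
  congr 2
  ext i
  simp

theorem sum_mul_mem_Icc_of_mem_stdSimplex [Fintype ι] {w : ι → ℝ} (hw : w ∈ stdSimplex ℝ ι)
    (z : ι → ℝ) : ∑ i, w i * z i ∈ Set.Icc (⨅ i, z i) (⨆ i, z i) :=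
  (convex_Icc _ _).sum_mem (fun i _ => hw.1 i) hw.2 fun i _ =>
    ⟨ciInf_le (Set.finite_range z).bddBelow i, le_ciSup (Set.finite_range z).bddAbove i⟩

variable {b : ι → E} {x : E}

theorem interpolationEnvelope_le_iSup [Fintype ι] (z : ι → ℝ)
    (hx : x ∈ convexHull ℝ (Set.range b)) : interpolationEnvelope b z x ≤ ⨆ i, z i := by
  rw [convexHull_range_eq_image_stdSimplex] at hx
  obtain ⟨w, hw, hwx⟩ := hx
  refine csInf_le_of_le ⟨⨅ i, z i, ?_⟩ ⟨w, hw.1, hw.2, hwx, rfl⟩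
    (sum_mul_mem_Icc_of_mem_stdSimplex hw z).2
  rintro _ ⟨v, hv_nonneg, hv_sum, -, rfl⟩
  exact (sum_mul_mem_Icc_of_mem_stdSimplex ⟨hv_nonneg, hv_sum⟩ z).1

theorem le_interpolationEnvelope [Fintype ι] {g : E → ℝ} {z : ι → ℝ}
    (hg : ConvexOn ℝ (convexHull ℝ (Set.range b)) g) (hz : ∀ i, g (b i) ≤ z i)
    (hx : x ∈ convexHull ℝ (Set.range b)) : g x ≤ interpolationEnvelope b z x := by
  rw [convexHull_range_eq_image_stdSimplex] at hx
  obtain ⟨w, hw, hwx⟩ := hx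
  refine le_csInf ⟨_, w, hw.1, hw.2, hwx, rfl⟩ ?_
  rintro _ ⟨v, hv_nonneg, hv_sum, rfl, rfl⟩
  calc
    g (∑ i, v i • b i) ≤ ∑ i, v i • g (b i) :=
      hg.map_sum_le (fun i _ => hv_nonneg i) hv_sum fun i _ =>
        subset_convexHull ℝ _ (Set.mem_range_self i)
    _ ≤ ∑ i, v i * z i :=
      Finset.sum_le_sum fun i _ => mul_le_mul_of_nonneg_left (hz i) (hv_nonneg i)

theorem bddBelow_supportEnvelope_image_convexHull [Finite ι] (b : ι → E)
    (y : ι → Module.Dual ℝ E) (z : ι → ℝ) :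
    BddBelow (supportEnvelope b y z '' convexHull ℝ (Set.range b)) := by
  rcases isEmpty_or_nonempty ι with _ | ⟨⟨i⟩⟩
  · simp [Set.range_eq_empty]
  have affine_bddBelow :
      BddBelow ((fun x => y i x + (z i - y i (b i))) '' convexHull ℝ (Set.range b)) :=
    (((y i).concaveOn convex_univ).add_const _).bddBelow_convexHull (Set.subset_univ _)
      ((Set.finite_range b).image _).bddBelow
  obtain ⟨c, hc⟩ := affine_bddBelow
  refine ⟨c, Set.forall_mem_image.2 fun x hx => ?_⟩
  calc
    c ≤ y i x + (z i - y i (b i)) := hc (Set.mem_image_of_mem _ hx)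
    _ = z i + y i (x - b i) := by rw [map_sub]; ring
    _ ≤ supportEnvelope b y z x :=
      le_ciSup (f := fun i => z i + y i (x - b i)) (Set.finite_range _).bddAbove i

theorem bddAbove_envelopeGap_image_convexHull [Fintype ι] (b : ι → E)
    (y yt : ι → Module.Dual ℝ E) (z zt : ι → ℝ) :
    BddAbove (envelopeGap b y yt z zt '' convexHull ℝ (Set.range b)) := by
  obtain ⟨c, hc⟩ := bddBelow_supportEnvelope_image_convexHull b y z
  obtain ⟨ct, hct⟩ := bddBelow_supportEnvelope_image_convexHull b yt zt
  refine ⟨max ((⨆ i, zt i) - c) ((⨆ i, z i) - ct), Set.forall_mem_image.2 fun x hx => ?_⟩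
  exact max_le_max
    (sub_le_sub (interpolationEnvelope_le_iSup zt hx) (hc (Set.mem_image_of_mem _ hx)))
    (sub_le_sub (interpolationEnvelope_le_iSup z hx) (hct (Set.mem_image_of_mem _ hx)))

theorem abs_sub_le_envelopeGap [Fintype ι] {Φ f : E → ℝ}
    (hΦ : ConvexOn ℝ (convexHull ℝ (Set.range b)) Φ)
    (hf : ConvexOn ℝ (convexHull ℝ (Set.range b)) f)
    {z zt : ι → ℝ} (hz : ∀ i, z i = Φ (b i)) (hzt : ∀ i, zt i = f (b i))
    {y yt : ι → Module.Dual ℝ E} (hx : x ∈ convexHull ℝ (Set.range b))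
    (hy : ∀ i, Φ (b i) + y i (x - b i) ≤ Φ x) (hyt : ∀ i, f (b i) + yt i (x - b i) ≤ f x) :
    |f x - Φ x| ≤ envelopeGap b y yt z zt x := by
  have : Nonempty ι :=
    Set.range_nonempty_iff_nonempty.1 (convexHull_nonempty_iff.1 ⟨x, hx⟩)
  have Φ_le : Φ x ≤ interpolationEnvelope b z x :=
    le_interpolationEnvelope hΦ (fun i => (hz i).ge) hx
  have f_le : f x ≤ interpolationEnvelope b zt x :=
    le_interpolationEnvelope hf (fun i => (hzt i).ge) hx
  have le_Φ : supportEnvelope b y z x ≤ Φ x := ciSup_le fun i => hz i ▸ hy i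
  have le_f : supportEnvelope b yt zt x ≤ f x := ciSup_le fun i => hzt i ▸ hyt i
  rw [abs_le', neg_sub]
  exact ⟨le_max_of_le_left (sub_le_sub f_le le_Φ), le_max_of_le_right (sub_le_sub Φ_le le_f)⟩

theorem icnn_generalization_bound_general_general [Fintype ι] (Φ f : E → ℝ) (b : ι → E)
    (hΦ : ConvexOn ℝ (convexHull ℝ (Set.range b)) Φ)
    (hf : ConvexOn ℝ (convexHull ℝ (Set.range b)) f)
    (z zt : ι → ℝ) (hz : ∀ i, z i = Φ (b i)) (hzt : ∀ i, zt i = f (b i))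
    (y yt : ι → Module.Dual ℝ E)
    (hy : ∀ i, ∀ x ∈ convexHull ℝ (Set.range b), Φ (b i) + y i (x - b i) ≤ Φ x)
    (hyt : ∀ i, ∀ x ∈ convexHull ℝ (Set.range b), f (b i) + yt i (x - b i) ≤ f x) :
    BddAbove (envelopeGap b y yt z zt '' convexHull ℝ (Set.range b)) ∧
      ∀ x ∈ convexHull ℝ (Set.range b),
        |f x - Φ x| ≤ sSup (envelopeGap b y yt z zt '' convexHull ℝ (Set.range b)) := by
  have gap_bddAbove := bddAbove_envelopeGap_image_convexHull b y yt z zt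
  refine ⟨gap_bddAbove, fun x hx => ?_⟩
  calc
    |f x - Φ x| ≤ envelopeGap b y yt z zt x :=
      abs_sub_le_envelopeGap hΦ hf hz hzt hx (fun i => hy i x hx) fun i => hyt i x hx
    _ ≤ sSup (envelopeGap b y yt z zt '' convexHull ℝ (Set.range b)) :=
      le_csSup gap_bddAbove (Set.mem_image_of_mem _ hx)

end Envelopes

/-- **Theorem 1 of the paper** (generalization bound for arbitrary ICNNs).
Given the values `z̃ᵢ = f(bᵢ)`, `zᵢ = Φ(bᵢ)` and subgradients `ỹᵢ` of `f` and `yᵢ` of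
`Φ` at the data points, the constant
`M = sup_{x ∈ B} max (f̂ x − Φ̌ x) (Φ̂ x − f̌ x)` — which depends only on the data —
is finite (the supremand is bounded above on `B`) and bounds `|f − Φ|` on
`B = conv{b₁, …, b_N}`. -/
theorem icnn_generalization_bound_general
    {n N : ℕ}
    (Φ f : EuclideanSpace ℝ (Fin n) → ℝ)
    (hΦ : ConvexOn ℝ Set.univ Φ) (hf : ConvexOn ℝ Set.univ f)
    (b : Fin N → EuclideanSpace ℝ (Fin n))
    (z zt : Fin N → ℝ) (hz : ∀ i, z i = Φ (b i)) (hzt : ∀ i, zt i = f (b i))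
    (y yt : Fin N → EuclideanSpace ℝ (Fin n))
    (hy : ∀ i, ∀ b' : EuclideanSpace ℝ (Fin n), Φ (b i) + ⟪y i, b' - b i⟫ ≤ Φ b')
    (hyt : ∀ i, ∀ b' : EuclideanSpace ℝ (Fin n), f (b i) + ⟪yt i, b' - b i⟫ ≤ f b') :
    BddAbove ((fun x => max (upperEnvelope b zt x - lowerEnvelope b y z x)
        (upperEnvelope b z x - lowerEnvelope b yt zt x)) ''
        convexHull ℝ (Set.range b)) ∧
    ∀ x ∈ convexHull ℝ (Set.range b),
      |f x - Φ x| ≤ sSup ((fun x => max (upperEnvelope b zt x - lowerEnvelope b y z x)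
        (upperEnvelope b z x - lowerEnvelope b yt zt x)) ''
        convexHull ℝ (Set.range b)) := by
  have hB := convex_convexHull ℝ (Set.range b)
  exact icnn_generalization_bound_general_general Φ f b
    (hΦ.subset (Set.subset_univ _) hB) (hf.subset (Set.subset_univ _) hB) z zt hz hzt
    (fun i => innerₛₗ ℝ (y i)) (fun i => innerₛₗ ℝ (yt i))
    (fun i x _ => hy i x) (fun i x _ => hyt i x)
end
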